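/- Let w be a word of length n over a totally ordered alphabet with letters partitioned into 'even' and 'odd' types, and let λ = φ(w) be the shape produced by the generalized RSK algorithm (even letters form weakly increasing rows, odd letters allow strict decrease within columns). Then for every k ≥ 1, the sum of the first k row lengths of λ equals r_k(w), the maximal total size of a union of k disjoint increasing subsequences of w, and the sum of the first k column lengths equals c_k(w), the maximal total size of a union of k disjoint decreasing subsequences. -/

import Mathlib

variable {α : Type*} [LinearOrder α]

/-- Generalized row bumping: the incoming letter `x` bumps the leftmost entry strictly
greater than `x` if `x` is even (`parity x = true`), or the leftmost entry `≥ x` if `x`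
is odd; if no entry can be bumped, `x` is appended to the end of the row. Returns the new
row together with the bumped letter, if any. -/
def bumpRow (parity : α → Bool) (x : α) : List α → List α × Option α
  | [] => ([x], none)
  | y :: ys =>
    if (if parity x then x < y else x ≤ y) then (x :: ys, some y)
    else
      let p := bumpRow parity x ys
      (y :: p.1, p.2)

/-- Insertion of a letter into a tableau (a list of rows) by generalized row bumping. -/
def insertTab (parity : α → Bool) : α → List (List α) → List (List α)
  | x, [] => [[x]]
  | x, r :: rs =>
    let p := bumpRow parity x r
    match p.2 with
    | none => p.1 :: rs
    | some y => p.1 :: insertTab parity y rs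

/-- The tableau produced by the generalized RSK algorithm applied to the word `w`. -/
def rskTab (parity : α → Bool) (w : List α) : List (List α) :=
  w.foldl (fun T x => insertTab parity x T) ([] : List (List α))

/-!
For a fixed `k`, the sizes of the unions of `k` disjoint increasing (or decreasing) subsequences are
invariant under the generalized Knuth relations, in which two adjacent letters `x`, `z` trade places
next to a letter `y` between them: when the exchange breaks a chain running through `x` and `z`,
either `y` is free and replaces `x` in that chain, or the chains of `x` and `y` can exchange their
tails. Row insertion is a sequence of such relations, so a word is equivalent to the reading word of
its tableau. There the rows are increasing and the columns decreasing chains. Since a chain of one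
kind meets a chain of the other at most once, `k` disjoint increasing subsequences contain at most
`min k ℓ` letters of a column of length `ℓ`, which adds up to the first `k` row lengths; dually, `k`
disjoint decreasing subsequences contain at most `min k ℓ` letters of a row of length `ℓ`.
-/

/-- Two transitive relations that are complements of each other, like the relations between the
letters of an increasing and of a decreasing word. -/
structure ComplTrans {β : Type*} (I D : β → β → Prop) : Prop where
  trans_left : ∀ {a b c}, I a b → I b c → I a c
  trans_right : ∀ {a b c}, D a b → D b c → D a c
  right_iff : ∀ a b, D a b ↔ ¬ I a b

namespace ComplTrans

variable {β : Type*} {I D : β → β → Prop} {a b c : β}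

theorem left_iff (h : ComplTrans I D) (a b : β) : I a b ↔ ¬ D a b := by
  rw [h.right_iff, not_not]

theorem not_right (h : ComplTrans I D) (hab : I a b) : ¬ D a b :=
  (h.left_iff a b).1 hab

theorem left_or_right (h : ComplTrans I D) (a b : β) : I a b ∨ D a b := by
  rw [h.right_iff]
  exact em _

protected theorem symm (h : ComplTrans I D) : ComplTrans D I :=
  ⟨h.trans_right, h.trans_left, h.left_iff⟩

protected theorem flip (h : ComplTrans I D) : ComplTrans (flip I) (flip D) :=
  ⟨fun h₁ h₂ => h.trans_left h₂ h₁, fun h₁ h₂ => h.trans_right h₂ h₁, fun a b => h.right_iff b a⟩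

theorem left_of_common_source (h : ComplTrans I D) (hac : I a c) (hab : D a b) : I b c :=
  (h.left_iff b c).2 fun hbc => h.not_right hac (h.trans_right hab hbc)

theorem left_of_common_target (h : ComplTrans I D) (hac : I a c) (hbc : D b c) : I a b :=
  (h.left_iff a b).2 fun hab => h.not_right hac (h.trans_right hab hbc)

end ComplTrans

section Colorings

variable {β κ κ' : Type*} {I D : β → β → Prop}

/-- Two letters of a word partially coloured by `κ` are `I`-related if they share a colour. A word
all of whose pairs of letters satisfy this is a family of disjoint `I`-chains indexed by `κ`. -/
def ColorRel (I : β → β → Prop) (p q : β × Option κ) : Prop :=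
  ∀ t, p.2 = some t → q.2 = some t → I p.1 q.1

/-- The number of coloured letters, i.e. the total size of the family of chains. -/
def coloredCount (c : List (β × Option κ)) : ℕ := c.countP fun p => p.2.isSome

/-- Renaming of the colours of a partially coloured word. -/
def recolor (σ : κ → κ') (c : List (β × Option κ)) : List (β × Option κ') :=
  c.map (Prod.map id (Option.map σ))

@[simp] theorem coloredCount_append (c₁ c₂ : List (β × Option κ)) :
    coloredCount (c₁ ++ c₂) = coloredCount c₁ + coloredCount c₂ :=
  List.countP_append

@[simp] theorem coloredCount_cons (p : β × Option κ) (c : List (β × Option κ)) :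
    coloredCount (p :: c) = coloredCount c + if p.2.isSome then 1 else 0 :=
  List.countP_cons

@[simp] theorem map_fst_recolor (σ : κ → κ') (c : List (β × Option κ)) :
    (recolor σ c).map Prod.fst = c.map Prod.fst := by
  simp [recolor]

@[simp] theorem coloredCount_recolor (σ : κ → κ') (c : List (β × Option κ)) :
    coloredCount (recolor σ c) = coloredCount c := by
  simp [coloredCount, recolor, List.countP_map, Function.comp_def]

theorem pairwise_recolor {σ : κ → κ'} (hσ : σ.Injective) {c : List (β × Option κ)}
    (hc : c.Pairwise (ColorRel I)) : (recolor σ c).Pairwise (ColorRel I) := by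
  refine List.pairwise_map.2 (hc.imp fun {p q} hpq t hp hq => ?_)
  obtain ⟨s, hps, rfl⟩ := Option.map_eq_some_iff.1 hp
  obtain ⟨s', hqs, hs⟩ := Option.map_eq_some_iff.1 hq
  exact hpq s hps (hσ hs ▸ hqs)

theorem pairwise_colorRel_swap {c₁ c₂ : List (β × Option κ)} {p q : β × Option κ}
    (hc : (c₁ ++ p :: q :: c₂).Pairwise (ColorRel I)) (hqp : ColorRel I q p) :
    (c₁ ++ q :: p :: c₂).Pairwise (ColorRel I) := by
  simp only [List.pairwise_append, List.pairwise_cons, List.mem_cons, forall_eq_or_imp] at hc ⊢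
  obtain ⟨h₁, ⟨⟨-, hp⟩, hq, h₂⟩, h₁₂⟩ := hc
  exact ⟨h₁, ⟨⟨hqp, hq⟩, hp, h₂⟩, fun e he =>
    ⟨(h₁₂ e he).2.1, (h₁₂ e he).1, (h₁₂ e he).2.2⟩⟩

theorem pairwise_colorRel_transfer (h : ComplTrans I D) {c₁ c₂ : List (β × Option κ)} {x y : β}
    {t : κ} (hyx : D y x) (hc : (c₁ ++ (y, none) :: (x, some t) :: c₂).Pairwise (ColorRel I))
    (hy : ∀ e ∈ c₂, e.2 = some t → I y e.1) :
    (c₁ ++ (y, some t) :: (x, none) :: c₂).Pairwise (ColorRel I) := by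
  simp only [List.pairwise_append, List.pairwise_cons, List.mem_cons, forall_eq_or_imp] at hc ⊢
  obtain ⟨h₁, ⟨-, -, h₂⟩, h₁₂⟩ := hc
  refine ⟨h₁, ⟨⟨by simp [ColorRel], ?_⟩, by simp [ColorRel], h₂⟩, fun e he =>
    ⟨?_, by simp [ColorRel], (h₁₂ e he).2.2⟩⟩
  · rintro e he _ ⟨⟩ het
    exact hy e he het
  · exact fun s hes hs => h.left_of_common_target ((h₁₂ e he).2.1 s hes hs) hyx

theorem pairwise_colorRel_exchange_tails [DecidableEq κ] {c₁ c₂ : List (β × Option κ)} {s t : κ}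
    (hc : (c₁ ++ c₂).Pairwise (ColorRel I))
    (hst : ∀ e ∈ c₁, ∀ f ∈ c₂, e.2 = some s → f.2 = some t → I e.1 f.1)
    (hts : ∀ e ∈ c₁, ∀ f ∈ c₂, e.2 = some t → f.2 = some s → I e.1 f.1) :
    (c₁ ++ recolor (Equiv.swap s t) c₂).Pairwise (ColorRel I) := by
  obtain ⟨h₁, h₂, h₁₂⟩ := List.pairwise_append.1 hc
  refine List.pairwise_append.2 ⟨h₁, pairwise_recolor (Equiv.injective _) h₂, ?_⟩
  rintro e he g hg r her hgr
  obtain ⟨f, hf, rfl⟩ := List.mem_map.1 hg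
  obtain ⟨r', hfr', rfl⟩ := Option.map_eq_some_iff.1 hgr
  by_cases hs : r' = s
  · subst hs
    exact hts e he f hf (by simpa using her) hfr'
  by_cases ht : r' = t
  · subst ht
    exact hst e he f hf (by simpa using her) hfr'
  · rw [Equiv.swap_apply_of_ne_of_ne hs ht] at her
    exact h₁₂ e he f hf r' her hfr'

theorem coloredCount_le_card [Fintype κ] (hID : ∀ a b, I a b → ¬ D a b)
    {c : List (β × Option κ)} (hI : c.Pairwise (ColorRel I))
    (hD : (c.map Prod.fst).Pairwise D) : coloredCount c ≤ Fintype.card κ := by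
  have hnodup : (c.filterMap Prod.snd).Nodup := by
    refine List.pairwise_filterMap.2 ((hI.and (List.pairwise_map.1 hD)).imp ?_)
    rintro p q ⟨hpq, hD⟩ s hs t ht rfl
    exact hID _ _ (hpq s hs ht) hD
  simpa only [coloredCount, List.length_filterMap_eq_countP] using hnodup.length_le_card

end Colorings

/-- The word `w` has `k` disjoint subsequences, each a chain for `I`, of total size `m`. They are
encoded by a partial colouring of the letters of `w` by `k` colours. -/
def HasChains {β : Type*} (I : β → β → Prop) (w : List β) (k m : ℕ) : Prop :=
  ∃ c : List (β × Option (Fin k)), c.map Prod.fst = w ∧ c.Pairwise (ColorRel I) ∧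
    coloredCount c = m

section Chains

variable {β γ : Type*} {I D : β → β → Prop} {k m : ℕ}

theorem HasChains.reverse {w : List β} (h : HasChains I w k m) :
    HasChains (flip I) w.reverse k m := by
  obtain ⟨c, rfl, hc, rfl⟩ := h
  refine ⟨c.reverse, List.map_reverse, ?_, List.countP_reverse⟩
  exact List.pairwise_reverse.2 (hc.imp fun hpq t hp hq => hpq t hq hp)

theorem hasChains_reverse {w : List β} :
    HasChains (flip I) w.reverse k m ↔ HasChains I w k m :=
  ⟨fun h => by simpa using h.reverse, HasChains.reverse⟩

theorem hasChains_map {f : γ → β} {w : List γ} :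
    HasChains I (w.map f) k m ↔ HasChains (Function.onFun I f) w k m := by
  constructor
  · rintro ⟨c, hc, hI, rfl⟩
    have hlen : w.length = c.length := by simpa using (congrArg List.length hc).symm
    have hzip : (w.zip (c.map Prod.snd)).map (Prod.map f id) = c := by
      rw [← List.zip_map_left, ← hc, List.zip_map', List.map_id']
    refine ⟨w.zip (c.map Prod.snd), List.map_fst_zip (by simp [hlen]), ?_, ?_⟩
    · rw [← hzip, List.pairwise_map] at hI
      exact hI
    · conv_rhs => rw [← hzip, coloredCount, List.countP_map]
      rfl
  · rintro ⟨c, rfl, hI, rfl⟩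
    refine ⟨c.map (Prod.map f id), by simp [Function.comp_def], List.pairwise_map.2 hI, ?_⟩
    rw [coloredCount, List.countP_map]
    rfl

theorem hasChains_zero_size (I : β → β → Prop) (w : List β) (k : ℕ) : HasChains I w k 0 :=
  ⟨w.map fun a => (a, none), by simp [Function.comp_def],
    List.pairwise_map.2 (List.pairwise_of_forall (by simp [ColorRel])), by simp [coloredCount]⟩

theorem HasChains.append_chain {u v : List β} (hu : HasChains I u k m) (hv : v.Pairwise I) :
    HasChains I (u ++ v) (k + 1) (m + v.length) := by
  obtain ⟨c, rfl, hc, rfl⟩ := hu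
  refine ⟨recolor Fin.castSucc c ++ v.map fun a => (a, some (Fin.last k)), ?_, ?_, ?_⟩
  · simp [Function.comp_def]
  · refine List.pairwise_append.2 ⟨pairwise_recolor (Fin.castSucc_injective k) hc,
      List.pairwise_map.2 (hv.imp fun hab _ _ _ => hab), ?_⟩
    rintro p hp q hq t hpt hqt
    obtain ⟨e, -, rfl⟩ := List.mem_map.1 hp
    obtain ⟨b, -, rfl⟩ := List.mem_map.1 hq
    obtain ⟨s, -, rfl⟩ := Option.map_eq_some_iff.1 hpt
    exact absurd (Option.some.inj hqt).symm (Fin.castSucc_ne_last s)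
  · rw [coloredCount_append, coloredCount_recolor]
    simp [coloredCount, Function.comp_def]

theorem hasChains_of_labels (κ : β → ℕ) {w : List β}
    (hκ : w.Pairwise fun a b => κ a = κ b → I a b) (k : ℕ) :
    HasChains I w k (w.countP fun a => κ a < k) := by
  refine ⟨w.map fun a => (a, if h : κ a < k then some ⟨κ a, h⟩ else none),
    by simp [Function.comp_def], ?_, ?_⟩
  · refine List.pairwise_map.2 (hκ.imp fun hab t ha hb => hab ?_)
    simp only [Option.dite_none_right_eq_some, Option.some.injEq] at ha hb
    obtain ⟨_, rfl⟩ := ha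
    obtain ⟨_, hb⟩ := hb
    exact (congrArg Fin.val hb).symm
  · rw [coloredCount, List.countP_map]
    refine List.countP_congr fun a _ => ?_
    simp

theorem countP_lt_eq_sum_countP_eq (κ : β → ℕ) (w : List β) (n : ℕ) :
    w.countP (fun a => κ a < n) = ∑ j ∈ Finset.range n, w.countP fun a => κ a = j := by
  induction w with
  | nil => simp
  | cons a w ih => simp [List.countP_cons, Finset.sum_add_distrib, ih]

theorem HasChains.le_sum_min_length (hID : ∀ a b, I a b → ¬ D a b) {L : List (List β)}
    (hL : ∀ r ∈ L, r.Pairwise D) (hm : HasChains I L.flatten k m) :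
    m ≤ (L.map fun r => min k r.length).sum := by
  obtain ⟨c, hc, hI, rfl⟩ := hm
  induction L generalizing c with
  | nil => simp_all [coloredCount]
  | cons r L ih =>
    obtain ⟨c₁, c₂, rfl, rfl, hc₂⟩ := List.map_eq_append_iff.1 hc
    obtain ⟨hI₁, hI₂, -⟩ := List.pairwise_append.1 hI
    have h₁ : coloredCount c₁ ≤ min k (c₁.map Prod.fst).length :=
      le_min (by simpa using coloredCount_le_card hID hI₁ (hL _ (by simp)))
        (List.length_map (as := c₁) Prod.fst ▸ List.countP_le_length)
    have h₂ := ih (fun s hs => hL s (by simp [hs])) c₂ hc₂ hI₂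
    simpa using add_le_add h₁ h₂

theorem HasChains.le_sum_min_countP (hID : ∀ a b, I a b → ¬ D a b) (κ : β → ℕ) {w : List β}
    (hκ : w.Pairwise fun a b => κ a = κ b → D a b) {n : ℕ} (hn : ∀ a ∈ w, κ a < n)
    (hm : HasChains I w k m) :
    m ≤ ∑ j ∈ Finset.range n, min k (w.countP fun a => κ a = j) := by
  obtain ⟨c, rfl, hI, rfl⟩ := hm
  have hsum : coloredCount c =
      ∑ j ∈ Finset.range n, coloredCount (c.filter fun p => κ p.1 = j) := by
    have hlt : coloredCount c = (c.filter fun p => p.2.isSome).countP fun p => κ p.1 < n := by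
      rw [List.countP_filter]
      refine List.countP_congr fun p hp => ?_
      simp [hn p.1 (List.mem_map_of_mem hp)]
    rw [hlt, countP_lt_eq_sum_countP_eq fun p : β × Option (Fin k) => κ p.1]
    simp only [coloredCount, List.countP_filter, Bool.and_comm]
  rw [hsum]
  refine Finset.sum_le_sum fun j _ => le_min ?_ ?_
  · have hD : ((c.filter fun p => κ p.1 = j).map Prod.fst).Pairwise D := by
      rw [List.pairwise_map] at hκ ⊢
      refine List.pairwise_filter.2 (hκ.imp fun hpq hp hq => hpq ?_)
      exact (of_decide_eq_true hp).trans (of_decide_eq_true hq).symm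
    simpa using coloredCount_le_card hID (hI.filter _) hD
  · rw [List.countP_map, List.countP_eq_length_filter]
    exact List.countP_le_length

end Chains

/-- Generalized Knuth equivalence of words: two adjacent letters may be exchanged next to a letter
`y` lying between them. For a `ComplTrans` pair the notion is symmetric in `I` and `D`. -/
inductive KnuthEquiv {β : Type*} (I D : β → β → Prop) : List β → List β → Prop
  | refl (w) : KnuthEquiv I D w w
  | symm {w w'} : KnuthEquiv I D w w' → KnuthEquiv I D w' w
  | trans {w w' w''} : KnuthEquiv I D w w' → KnuthEquiv I D w' w'' → KnuthEquiv I D w w''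
  | swap_after {x y z} (u v) : I y z → D y x →
      KnuthEquiv I D (u ++ y :: z :: x :: v) (u ++ y :: x :: z :: v)
  | swap_before {x y z} (u v) : I x y → D z y →
      KnuthEquiv I D (u ++ x :: z :: y :: v) (u ++ z :: x :: y :: v)

section Knuth

variable {β : Type*} {I D : β → β → Prop} {k m : ℕ} {x y z : β} {u v w w' : List β}

namespace KnuthEquiv

theorem append_left (h : KnuthEquiv I D w w') (u : List β) : KnuthEquiv I D (u ++ w) (u ++ w') := by
  induction h with
  | refl => exact refl _
  | symm _ ih => exact ih.symm
  | trans _ _ ih ih' => exact ih.trans ih'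
  | swap_after u' v hyz hyx => simpa only [List.append_assoc] using swap_after (u ++ u') v hyz hyx
  | swap_before u' v hxy hzy => simpa only [List.append_assoc] using swap_before (u ++ u') v hxy hzy

theorem append_right (h : KnuthEquiv I D w w') (v : List β) :
    KnuthEquiv I D (w ++ v) (w' ++ v) := by
  induction h with
  | refl => exact refl _
  | symm _ ih => exact ih.symm
  | trans _ _ ih ih' => exact ih.trans ih'
  | swap_after u v' hyz hyx => simpa using swap_after u (v' ++ v) hyz hyx
  | swap_before u v' hxy hzy => simpa using swap_before u (v' ++ v) hxy hzy

theorem cons (h : KnuthEquiv I D w w') (a : β) : KnuthEquiv I D (a :: w) (a :: w') :=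
  h.append_left [a]

theorem dual (h : KnuthEquiv I D w w') : KnuthEquiv D I w w' := by
  induction h with
  | refl => exact refl _
  | symm _ ih => exact ih.symm
  | trans _ _ ih ih' => exact ih.trans ih'
  | swap_after u v hyz hyx => exact (swap_after u v hyx hyz).symm
  | swap_before u v hxy hzy => exact (swap_before u v hzy hxy).symm

end KnuthEquiv

theorem hasChains_of_pairwise_swap {c₁ c₂ : List (β × Option (Fin k))} {p q : β × Option (Fin k)}
    (hc : (c₁ ++ p :: q :: c₂).Pairwise (ColorRel I)) (hqp : ColorRel I q p) :
    HasChains I (c₁.map Prod.fst ++ q.1 :: p.1 :: c₂.map Prod.fst) k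
      (coloredCount (c₁ ++ p :: q :: c₂)) :=
  ⟨c₁ ++ q :: p :: c₂, by simp, pairwise_colorRel_swap hc hqp, by simp; omega⟩

theorem HasChains.sort_adjacent (hxz : I x z) (hm : HasChains I (u ++ z :: x :: v) k m) :
    HasChains I (u ++ x :: z :: v) k m := by
  obtain ⟨c, hc, hI, rfl⟩ := hm
  obtain ⟨c₁, _, rfl, rfl, hzx⟩ := List.map_eq_append_iff.1 hc
  obtain ⟨p, _, rfl, rfl, hx⟩ := List.map_eq_cons_iff.1 hzx
  obtain ⟨q, c₂, rfl, rfl, rfl⟩ := List.map_eq_cons_iff.1 hx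
  exact hasChains_of_pairwise_swap hI fun _ _ _ => hxz

theorem ComplTrans.left_of_pairwise_colorRel (h : ComplTrans I D) (hyz : I y z)
    {c : List (β × Option (Fin k))} {t : Fin k}
    (hc : ((z, some t) :: c).Pairwise (ColorRel I)) :
    ∀ e ∈ (z, some t) :: c, e.2 = some t → I y e.1 :=
  List.forall_mem_cons.2 ⟨fun _ => hyz, fun _ he het =>
    h.trans_left hyz (List.rel_of_pairwise_cons hc he t rfl het)⟩

theorem hasChains_of_pairwise_transfer (h : ComplTrans I D) (hyz : I y z) (hyx : D y x)
    {c₁ c₂ : List (β × Option (Fin k))} {t : Fin k}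
    (hc : (c₁ ++ (y, none) :: (x, some t) :: (z, some t) :: c₂).Pairwise (ColorRel I)) :
    HasChains I (c₁.map Prod.fst ++ y :: z :: x :: c₂.map Prod.fst) k
      (coloredCount (c₁ ++ (y, none) :: (x, some t) :: (z, some t) :: c₂)) := by
  have htail := (List.pairwise_append.1 hc).2.1.of_cons.of_cons
  have hc' := pairwise_colorRel_transfer h hyx hc (h.left_of_pairwise_colorRel hyz htail)
  rw [List.append_cons] at hc'
  simpa using hasChains_of_pairwise_swap hc' (by simp [ColorRel])

theorem hasChains_of_pairwise_exchange_tails (h : ComplTrans I D) (hyz : I y z) (hyx : D y x)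
    {c₁ c₂ : List (β × Option (Fin k))} {s t : Fin k}
    (hc : (c₁ ++ (y, some s) :: (x, some t) :: (z, some t) :: c₂).Pairwise (ColorRel I)) :
    HasChains I (c₁.map Prod.fst ++ y :: z :: x :: c₂.map Prod.fst) k
      (coloredCount (c₁ ++ (y, some s) :: (x, some t) :: (z, some t) :: c₂)) := by
  obtain ⟨-, hyxz, hhead⟩ := List.pairwise_append.1 hc
  obtain ⟨hy, hxz⟩ := List.pairwise_cons.1 hyxz
  have hst : s ≠ t := by
    rintro rfl
    exact h.not_right (hy (x, some s) (by simp) s rfl rfl) hyx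
  have hyt := h.left_of_pairwise_colorRel hyz hxz.of_cons
  have hxs : ∀ f ∈ (z, some t) :: c₂, f.2 = some s → I x f.1 := fun f hf hfs =>
    h.left_of_common_source (hy f (List.mem_cons_of_mem _ hf) s rfl hfs) hyx
  have hc' : ((c₁ ++ [(y, some s), (x, some t)]) ++
      recolor (Equiv.swap s t) ((z, some t) :: c₂)).Pairwise (ColorRel I) := by
    refine pairwise_colorRel_exchange_tails (by simpa using hc) ?_ ?_
    all_goals
      intro e he f hf hes hft
      simp only [List.mem_append, List.mem_cons, List.not_mem_nil, or_false] at he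
      obtain he | rfl | rfl := he
    · exact h.trans_left (hhead e he (y, some s) (by simp) s hes rfl) (hyt f hf hft)
    · exact hyt f hf hft
    · exact absurd (Option.some.inj hes).symm hst
    · exact h.trans_left (hhead e he (x, some t) (by simp) t hes rfl) (hxs f hf hft)
    · exact absurd (Option.some.inj hes) hst
    · exact hxs f hf hft
  have hzx : ColorRel I (z, some s) (x, some t) := by simp [ColorRel, hst.symm]
  rw [List.append_cons] at hc'
  have hm := hasChains_of_pairwise_swap (c₁ := c₁ ++ [(y, some s)])
    (c₂ := recolor (Equiv.swap s t) c₂) (p := (x, some t)) (q := (z, some s))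
    (by simpa [recolor] using hc') hzx
  simpa using hm

-- If a chain runs through both `x` and `z`, then `y` either takes the place of `x` in it or, being
-- on another chain, exchanges with it the tails starting at `z`.
theorem HasChains.swap_after (h : ComplTrans I D) (hyz : I y z) (hyx : D y x)
    (hm : HasChains I (u ++ y :: x :: z :: v) k m) : HasChains I (u ++ y :: z :: x :: v) k m := by
  obtain ⟨c, hc, hI, rfl⟩ := hm
  obtain ⟨c₁, _, rfl, rfl, hyxz⟩ := List.map_eq_append_iff.1 hc
  obtain ⟨⟨y, s⟩, _, rfl, rfl, hxz⟩ := List.map_eq_cons_iff.1 hyxz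
  obtain ⟨⟨x, tx⟩, _, rfl, rfl, hz⟩ := List.map_eq_cons_iff.1 hxz
  obtain ⟨⟨z, tz⟩, c₂, rfl, rfl, rfl⟩ := List.map_eq_cons_iff.1 hz
  by_cases hcommon : ∃ t, tx = some t ∧ tz = some t
  · obtain ⟨t, rfl, rfl⟩ := hcommon
    cases s with
    | none => exact hasChains_of_pairwise_transfer h hyz hyx hI
    | some s => exact hasChains_of_pairwise_exchange_tails h hyz hyx hI
  · have hzx : ColorRel I (z, tz) (x, tx) := fun t htz htx => absurd ⟨t, htx, htz⟩ hcommon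
    rw [List.append_cons] at hI
    simpa using hasChains_of_pairwise_swap hI hzx

theorem hasChains_swap_after_iff (h : ComplTrans I D) (hyz : I y z) (hyx : D y x) :
    HasChains I (u ++ y :: z :: x :: v) k m ↔ HasChains I (u ++ y :: x :: z :: v) k m := by
  refine ⟨fun hm => ?_, HasChains.swap_after h hyz hyx⟩
  rw [List.append_cons] at hm ⊢
  exact hm.sort_adjacent (h.left_of_common_source hyz hyx)

theorem hasChains_swap_before_iff (h : ComplTrans I D) (hxy : I x y) (hzy : D z y) :
    HasChains I (u ++ x :: z :: y :: v) k m ↔ HasChains I (u ++ z :: x :: y :: v) k m := by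
  rw [← hasChains_reverse, ← hasChains_reverse (w := u ++ z :: x :: y :: v)]
  simpa using (hasChains_swap_after_iff h.flip (u := v.reverse) (v := u.reverse)
    (k := k) (m := m) hxy hzy).symm

theorem KnuthEquiv.hasChains_iff (h : ComplTrans I D) (hw : KnuthEquiv I D w w') :
    HasChains I w k m ↔ HasChains I w' k m := by
  induction hw with
  | refl => exact Iff.rfl
  | symm _ ih => exact ih.symm
  | trans _ _ ih ih' => exact ih.trans ih'
  | swap_after u v hyz hyx => exact hasChains_swap_after_iff h hyz hyx
  | swap_before u v hxy hzy => exact hasChains_swap_before_iff h hxy hzy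

theorem knuthEquiv_append_singleton (h : ComplTrans I D) (hw : (y :: w).Pairwise I)
    (hyx : D y x) : KnuthEquiv I D (y :: (w ++ [x])) (y :: x :: w) := by
  induction w generalizing y with
  | nil => exact .refl _
  | cons z w ih =>
    obtain ⟨hy, hw⟩ := List.pairwise_cons.1 hw
    have hyz : I y z := hy z (by simp)
    have hzx : D z x := h.symm.left_of_common_source hyx hyz
    exact ((ih hw hzx).cons y).trans (.swap_after [] w hyz hyx)

theorem knuthEquiv_append_cons (h : ComplTrans I D) (hw : (w ++ [x]).Pairwise I)
    (hyx : D y x) : KnuthEquiv I D (w ++ [y, x]) (y :: (w ++ [x])) := by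
  induction w with
  | nil => exact .refl _
  | cons a w ih =>
    obtain ⟨ha, hw⟩ := List.pairwise_cons.1 hw
    refine ((ih hw).cons a).trans ?_
    cases w with
    | nil => exact .swap_before [] [] (ha x (by simp)) hyx
    | cons b w =>
      have hbx : I b x := (List.pairwise_cons.1 hw).1 x (by simp)
      exact .swap_before [] (w ++ [x]) (ha b (by simp)) (h.symm.left_of_common_target hyx hbx)

theorem pairwise_append_singleton :
    (w ++ [x]).Pairwise I ↔ w.Pairwise I ∧ ∀ a ∈ w, I a x := by
  simp [List.pairwise_append]

theorem knuthEquiv_replace (h : ComplTrans I D) (huv : (u ++ y :: v).Pairwise I)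
    (hux : ∀ a ∈ u, I a x) (hyx : D y x) :
    KnuthEquiv I D (u ++ y :: v ++ [x]) (y :: (u ++ x :: v)) := by
  obtain ⟨hu, hv, -⟩ := List.pairwise_append.1 huv
  have hleft := (knuthEquiv_append_singleton h hv hyx).append_left u
  have hux' := pairwise_append_singleton.2 ⟨hu, hux⟩
  have hright := (knuthEquiv_append_cons h hux' hyx).append_right v
  simp only [List.append_assoc, List.cons_append, List.nil_append] at hleft hright ⊢
  exact hleft.trans hright

end Knuth

/-- The row `s` fits under the row `r`: it is no longer than `r`, and each of its entries is
`D`-related to the entry of `r` above it. -/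
inductive FitsUnder {β : Type*} (D : β → β → Prop) : List β → List β → Prop
  | nil (r) : FitsUnder D [] r
  | cons {a b r s} : D b a → FitsUnder D s r → FitsUnder D (b :: s) (a :: r)

/-- A tableau, given by its list of rows from top to bottom: the rows are `I`-chains and the
columns, read upwards, are `D`-chains. -/
structure IsTableau {β : Type*} (I D : β → β → Prop) (T : List (List β)) : Prop where
  pairwise_of_mem : ∀ r ∈ T, r.Pairwise I
  isChain : T.IsChain fun r s => FitsUnder D s r

/-- The reading word of a tableau: its rows are read from bottom to top. -/
def readingWord {β : Type*} (T : List (List β)) : List β := T.reverse.flatten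

section Tableau

variable {β γ : Type*} {I D : β → β → Prop} {T : List (List β)} {k m : ℕ}

namespace FitsUnder

variable {r s t : List β}

protected theorem trans (h : ComplTrans I D) (hts : FitsUnder D t s) (hsr : FitsUnder D s r) :
    FitsUnder D t r := by
  induction hts generalizing r with
  | nil => exact .nil r
  | cons hcb _ ih =>
    cases hsr with
    | cons hba hsr => exact .cons (h.trans_right hcb hba) (ih hsr)

theorem length_le (h : FitsUnder D s r) : s.length ≤ r.length := by
  induction h with
  | nil => exact Nat.zero_le _
  | cons _ _ ih => exact Nat.succ_le_succ ih

theorem rel_of_getElem? (h : FitsUnder D s r) {j : ℕ} {a b : β} (hb : s[j]? = some b)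
    (ha : r[j]? = some a) : D b a := by
  induction h generalizing j with
  | nil => simp at hb
  | cons hba _ ih =>
    cases j with
    | zero => simp_all
    | succ j => exact ih hb ha

theorem append_right (h : FitsUnder D s r) (t : List β) : FitsUnder D s (r ++ t) := by
  induction h with
  | nil => exact .nil _
  | cons hba _ ih => exact .cons hba ih

theorem replace (h : ComplTrans I D) {u v : List β} {x y : β} (hyx : D y x)
    (hs : FitsUnder D s (u ++ y :: v)) : FitsUnder D s (u ++ x :: v) := by
  induction u generalizing s with
  | nil =>
    cases hs with
    | nil => exact .nil _
    | cons hby hs => exact .cons (h.trans_right hby hyx) hs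
  | cons a u ih =>
    cases hs with
    | nil => exact .nil _
    | cons hba hs => exact .cons hba (ih hs)

end FitsUnder

theorem pairwise_replace (h : ComplTrans I D) {u v : List β} {x y : β}
    (huv : (u ++ y :: v).Pairwise I) (hux : ∀ a ∈ u, I a x) (hyx : D y x) :
    (u ++ x :: v).Pairwise I := by
  simp only [List.pairwise_append, List.pairwise_cons, List.forall_mem_cons] at huv ⊢
  obtain ⟨hu, ⟨hy, hv⟩, hcross⟩ := huv
  exact ⟨hu, ⟨fun b hb => h.left_of_common_source (hy b hb) hyx, hv⟩,
    fun a ha => ⟨hux a ha, (hcross a ha).2⟩⟩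

theorem isTableau_nil : IsTableau I D [] := ⟨by simp, .nil⟩

theorem isTableau_cons {r : List β} :
    IsTableau I D (r :: T) ↔ r.Pairwise I ∧ FitsUnder D (T.headD []) r ∧ IsTableau I D T := by
  have hhead : (∀ s ∈ T.head?, FitsUnder D s r) ↔ FitsUnder D (T.headD []) r := by
    cases T <;> simp [FitsUnder.nil]
  constructor
  · rintro ⟨hrows, hcols⟩
    obtain ⟨hr, hT⟩ := List.forall_mem_cons.1 hrows
    obtain ⟨hrT, hcols⟩ := List.isChain_cons.1 hcols
    exact ⟨hr, hhead.1 hrT, hT, hcols⟩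
  · rintro ⟨hr, hrT, hT⟩
    exact ⟨List.forall_mem_cons.2 ⟨hr, hT.pairwise_of_mem⟩,
      List.isChain_cons.2 ⟨hhead.2 hrT, hT.isChain⟩⟩

theorem IsTableau.pairwise_fitsUnder (h : ComplTrans I D) (hT : IsTableau I D T) :
    T.Pairwise fun r s => FitsUnder D s r :=
  haveI : IsTrans (List β) fun r s => FitsUnder D s r := ⟨fun _ _ _ h₁ h₂ => h₂.trans h h₁⟩
  List.isChain_iff_pairwise.1 hT.isChain

@[simp] theorem readingWord_nil : readingWord ([] : List (List β)) = [] := rfl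

@[simp] theorem readingWord_cons (r : List β) (T : List (List β)) :
    readingWord (r :: T) = readingWord T ++ r := by
  simp [readingWord]

theorem map_fst_readingWord_zipIdx (T : List (List β)) :
    (readingWord (T.map List.zipIdx)).map Prod.fst = readingWord T := by
  induction T <;> simp_all

theorem IsTableau.pairwise_readingWord_zipIdx (h : ComplTrans I D) (hT : IsTableau I D T) :
    (readingWord (T.map List.zipIdx)).Pairwise fun p q => p.2 = q.2 → D p.1 q.1 := by
  refine List.pairwise_flatten.2 ⟨?_, ?_⟩
  · intro l hl
    obtain ⟨r, -, rfl⟩ := List.mem_map.1 (List.mem_reverse.1 hl)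
    have hnodup : (r.zipIdx.map Prod.snd).Nodup := by
      rw [List.zipIdx_map_snd]
      exact List.nodup_range'
    exact (List.pairwise_map.1 hnodup).imp fun hne heq => absurd heq hne
  · refine List.pairwise_reverse.2 (List.pairwise_map.2 ((hT.pairwise_fitsUnder h).imp ?_))
    rintro r s hsr ⟨b, i⟩ hb ⟨a, j⟩ ha rfl
    exact hsr.rel_of_getElem? (List.mk_mem_zipIdx_iff_getElem?.1 hb)
      (List.mk_mem_zipIdx_iff_getElem?.1 ha)

theorem countP_zipIdx_eq (r : List β) (j : ℕ) :
    (r.zipIdx.countP fun p => p.2 = j) = if j < r.length then 1 else 0 := by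
  have hcount : (r.zipIdx.countP fun p => p.2 = j) = (r.zipIdx.map Prod.snd).count j := by
    rw [List.count, List.countP_map]
    rfl
  rw [hcount, List.zipIdx_map_snd, List.Nodup.count List.nodup_range']
  simp [List.mem_range'_1]

theorem countP_readingWord_zipIdx_eq (T : List (List β)) (j : ℕ) :
    ((readingWord (T.map List.zipIdx)).countP fun p => p.2 = j) =
      T.countP fun r => j < r.length := by
  induction T with
  | nil => simp
  | cons r T ih => simp [ih, countP_zipIdx_eq, List.countP_cons]

theorem min_countP_eq_countP_take {p : γ → Bool} {l : List γ}
    (hl : l.Pairwise fun a b => p b → p a) (k : ℕ) :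
    min k (l.countP p) = (l.take k).countP p := by
  induction l generalizing k with
  | nil => simp
  | cons a l ih =>
    cases k with
    | zero => simp
    | succ k =>
      obtain ⟨ha, hl⟩ := List.pairwise_cons.1 hl
      rw [List.take_succ_cons, List.countP_cons, List.countP_cons, ← ih hl]
      by_cases hpa : p a
      · simp [hpa]
      · have hzero : l.countP p = 0 := List.countP_eq_zero.2 fun b hb hpb => hpa (ha b hb hpb)
        simp [hpa, hzero]

theorem sum_countP_lt_eq_sum_min (f : γ → ℕ) (l : List γ) (n : ℕ) :
    (∑ j ∈ Finset.range n, l.countP fun a => j < f a) = (l.map fun a => min n (f a)).sum := by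
  induction l with
  | nil => simp
  | cons a l ih =>
    have hfilter : (Finset.range n).filter (· < f a) = Finset.range (min n (f a)) := by
      ext; simp
    simp [List.countP_cons, Finset.sum_add_distrib, ih, hfilter, add_comm]

theorem hasChains_rows (hT : ∀ r ∈ T, r.Pairwise I) (k : ℕ) :
    HasChains I (readingWord T) k ((T.map List.length).take k).sum := by
  induction T generalizing k with
  | nil => simpa using hasChains_zero_size I [] k
  | cons r T ih =>
    obtain ⟨hr, hT⟩ := List.forall_mem_cons.1 hT
    cases k with
    | zero => simpa using hasChains_zero_size I (readingWord (r :: T)) 0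
    | succ k => simpa [add_comm] using (ih hT k).append_chain hr

theorem IsTableau.hasChains_columns (h : ComplTrans I D) (hT : IsTableau I D T) (k : ℕ) :
    HasChains D (readingWord T) k (∑ j ∈ Finset.range k, T.countP fun r => j < r.length) := by
  rw [← map_fst_readingWord_zipIdx, hasChains_map]
  simpa only [countP_lt_eq_sum_countP_eq, countP_readingWord_zipIdx_eq] using
    hasChains_of_labels Prod.snd (hT.pairwise_readingWord_zipIdx h) k

theorem HasChains.le_sum_take_length (h : ComplTrans I D) (hT : IsTableau I D T)
    (hm : HasChains I (readingWord T) k m) : m ≤ ((T.map List.length).take k).sum := by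
  rw [← map_fst_readingWord_zipIdx, hasChains_map] at hm
  have hlt : ∀ p ∈ readingWord (T.map List.zipIdx), p.2 < (T.map List.length).sum := by
    intro p hp
    obtain ⟨l, hl, hpl⟩ := List.mem_flatten.1 hp
    obtain ⟨r, hr, rfl⟩ := List.mem_map.1 (List.mem_reverse.1 hl)
    exact (List.snd_lt_of_mem_zipIdx hpl).trans_le (List.le_sum_of_mem (List.mem_map_of_mem hr))
  have hcol : ∀ j, min k (T.countP fun r => j < r.length) =
      (T.take k).countP fun r => j < r.length := by
    refine fun j => min_countP_eq_countP_take ((hT.pairwise_fitsUnder h).imp fun hsr hj => ?_) k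
    exact decide_eq_true ((of_decide_eq_true hj).trans_le hsr.length_le)
  calc m ≤ _ := hm.le_sum_min_countP (D := Function.onFun D Prod.fst) (fun _ _ => h.not_right)
        Prod.snd (hT.pairwise_readingWord_zipIdx h) hlt
    _ = ((T.take k).map fun r => min (T.map List.length).sum r.length).sum := by
      simp only [countP_readingWord_zipIdx_eq, hcol, sum_countP_lt_eq_sum_min]
    _ ≤ ((T.take k).map List.length).sum := List.sum_le_sum fun r _ => min_le_right _ _
    _ = ((T.map List.length).take k).sum := by rw [List.map_take]

theorem HasChains.le_sum_countP_length (hDI : ∀ a b, D a b → ¬ I a b) (hT : ∀ r ∈ T, r.Pairwise I)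
    (hm : HasChains D (readingWord T) k m) :
    m ≤ ∑ j ∈ Finset.range k, T.countP fun r => j < r.length := by
  rw [sum_countP_lt_eq_sum_min, ← List.sum_reverse, ← List.map_reverse]
  exact hm.le_sum_min_length hDI fun r hr => hT r (List.mem_reverse.1 hr)

theorem IsTableau.isGreatest_rows (h : ComplTrans I D) (hT : IsTableau I D T) (k : ℕ) :
    IsGreatest {m | HasChains I (readingWord T) k m} ((T.map List.length).take k).sum :=
  ⟨hasChains_rows hT.pairwise_of_mem k, fun _ hm => hm.le_sum_take_length h hT⟩

theorem IsTableau.isGreatest_columns (h : ComplTrans I D) (hT : IsTableau I D T) (k : ℕ) :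
    IsGreatest {m | HasChains D (readingWord T) k m}
      (∑ j ∈ Finset.range k, T.countP fun r => j < r.length) :=
  ⟨hT.hasChains_columns h k,
    fun _ hm => hm.le_sum_countP_length (fun _ _ => h.symm.not_right) hT.pairwise_of_mem⟩

end Tableau

/-- `IncRel parity x y`: the letter `y` may follow `x` in an increasing word, where
`parity a = true` means that `a` is even. -/
def IncRel (parity : α → Bool) (x y : α) : Prop := x < y ∨ (x = y ∧ parity x = true)

/-- `DecRel parity x y`: the letter `y` may follow `x` in a decreasing word. -/
def DecRel (parity : α → Bool) (x y : α) : Prop := y < x ∨ (x = y ∧ parity x = false)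

section Insertion

theorem complTrans_incRel_decRel (parity : α → Bool) :
    ComplTrans (IncRel parity) (DecRel parity) where
  trans_left := by
    rintro a b c (hab | ⟨rfl, ha⟩) (hbc | ⟨rfl, -⟩)
    exacts [.inl (hab.trans hbc), .inl hab, .inl hbc, .inr ⟨rfl, ha⟩]
  trans_right := by
    rintro a b c (hab | ⟨rfl, ha⟩) (hbc | ⟨rfl, -⟩)
    exacts [.inl (hbc.trans hab), .inl hab, .inl hbc, .inr ⟨rfl, ha⟩]
  right_iff a b := by
    rcases lt_trichotomy a b with h | rfl | h
    · simp [IncRel, DecRel, h, h.not_gt, h.ne]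
    · simp [IncRel, DecRel]
    · simp [IncRel, DecRel, h, h.not_gt, h.ne']

variable {parity : α → Bool} {x y : α} {u v r : List α} {T : List (List α)}

theorem bump_iff_decRel : (if parity x then x < y else x ≤ y) ↔ DecRel parity y x := by
  rcases lt_trichotomy x y with h | rfl | h
  · simp [DecRel, h, h.le]
  · simp [DecRel]
  · simp [DecRel, h.not_gt, h.not_ge, h.ne]

theorem bumpRow_cons_of_decRel (h : DecRel parity y x) (r : List α) :
    bumpRow parity x (y :: r) = (x :: r, some y) := by
  rw [bumpRow, if_pos (bump_iff_decRel.2 h)]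

theorem bumpRow_cons_of_incRel (h : IncRel parity y x) (r : List α) :
    bumpRow parity x (y :: r) = (y :: (bumpRow parity x r).1, (bumpRow parity x r).2) := by
  have hnot : ¬ DecRel parity y x := (complTrans_incRel_decRel parity).not_right h
  rw [bumpRow, if_neg (mt bump_iff_decRel.1 hnot)]

theorem bumpRow_eq_append_or_replace (parity : α → Bool) (x : α) (r : List α) :
    ((∀ a ∈ r, IncRel parity a x) ∧ bumpRow parity x r = (r ++ [x], none)) ∨
      ∃ u y v, r = u ++ y :: v ∧ (∀ a ∈ u, IncRel parity a x) ∧ DecRel parity y x ∧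
        bumpRow parity x r = (u ++ x :: v, some y) := by
  induction r with
  | nil => exact .inl ⟨by simp, rfl⟩
  | cons a r ih =>
    rcases (complTrans_incRel_decRel parity).left_or_right a x with hax | hax
    · rw [bumpRow_cons_of_incRel hax]
      obtain ⟨hr, heq⟩ | ⟨u, y, v, rfl, hu, hyx, heq⟩ := ih
      · exact .inl ⟨List.forall_mem_cons.2 ⟨hax, hr⟩, by rw [heq, List.cons_append]⟩
      · exact .inr ⟨a :: u, y, v, rfl, List.forall_mem_cons.2 ⟨hax, hu⟩, hyx,
          by rw [heq, List.cons_append]⟩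
    · exact .inr ⟨[], a, r, rfl, by simp, hax, bumpRow_cons_of_decRel hax r⟩

theorem fitsUnder_bumpRow (hux : ∀ a ∈ u, IncRel parity a x) (hyx : DecRel parity y x)
    {s : List α} (hs : FitsUnder (DecRel parity) s (u ++ y :: v)) :
    FitsUnder (DecRel parity) (bumpRow parity y s).1 (u ++ x :: v) := by
  have h := complTrans_incRel_decRel parity
  induction u generalizing s with
  | nil =>
    cases hs with
    | nil => exact .cons hyx (.nil _)
    | cons hby hs =>
      rw [bumpRow_cons_of_decRel hby]
      exact .cons hyx hs
  | cons a u ih =>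
    obtain ⟨hax, hux⟩ := List.forall_mem_cons.1 hux
    have hya : DecRel parity y a := h.symm.left_of_common_target hyx hax
    cases hs with
    | nil => exact .cons hya (.nil _)
    | @cons _ b _ s hba hs =>
      rcases h.left_or_right b y with hby | hby
      · rw [bumpRow_cons_of_incRel hby]
        exact .cons hba (ih hux hs)
      · rw [bumpRow_cons_of_decRel hby]
        exact .cons hya (hs.replace h hyx)

theorem headD_insertTab (parity : α → Bool) (x : α) (T : List (List α)) :
    (insertTab parity x T).headD [] = (bumpRow parity x (T.headD [])).1 := by
  cases T with
  | nil => rfl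
  | cons r T =>
    rw [insertTab]
    cases (bumpRow parity x r).2 <;> rfl

theorem isTableau_insertTab (x : α) (hT : IsTableau (IncRel parity) (DecRel parity) T) :
    IsTableau (IncRel parity) (DecRel parity) (insertTab parity x T) := by
  induction T generalizing x with
  | nil => exact isTableau_cons.2 ⟨List.pairwise_singleton .., .nil _, isTableau_nil⟩
  | cons r T ih =>
    obtain ⟨hr, hrT, hT'⟩ := isTableau_cons.1 hT
    obtain ⟨hrx, heq⟩ | ⟨u, y, v, rfl, hux, hyx, heq⟩ := bumpRow_eq_append_or_replace parity x r
    · simp only [insertTab, heq]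
      exact isTableau_cons.2 ⟨pairwise_append_singleton.2 ⟨hr, hrx⟩, hrT.append_right [x], hT'⟩
    · simp only [insertTab, heq]
      refine isTableau_cons.2 ⟨pairwise_replace (complTrans_incRel_decRel parity) hr hux hyx,
        ?_, ih y hT'⟩
      rw [headD_insertTab]
      exact fitsUnder_bumpRow hux hyx hrT

theorem knuthEquiv_insertTab (x : α) (hT : ∀ r ∈ T, r.Pairwise (IncRel parity)) :
    KnuthEquiv (IncRel parity) (DecRel parity) (readingWord T ++ [x])
      (readingWord (insertTab parity x T)) := by
  induction T generalizing x with
  | nil => exact .refl _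
  | cons r T ih =>
    obtain ⟨hr, hT'⟩ := List.forall_mem_cons.1 hT
    obtain ⟨-, heq⟩ | ⟨u, y, v, rfl, hux, hyx, heq⟩ := bumpRow_eq_append_or_replace parity x r
    · simpa only [insertTab, heq, readingWord_cons, List.append_assoc] using .refl _
    · have hrow := knuthEquiv_replace (complTrans_incRel_decRel parity) hr hux hyx
      simp only [insertTab, heq, readingWord_cons, List.append_assoc] at hrow ⊢
      refine (hrow.append_left _).trans ?_
      simpa using (ih y hT').append_right (u ++ x :: v)

theorem rskTab_append_singleton (parity : α → Bool) (w : List α) (x : α) :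
    rskTab parity (w ++ [x]) = insertTab parity x (rskTab parity w) := by
  simp [rskTab]

theorem isTableau_rskTab (parity : α → Bool) (w : List α) :
    IsTableau (IncRel parity) (DecRel parity) (rskTab parity w) := by
  induction w using List.reverseRecOn with
  | nil => exact isTableau_nil
  | append_singleton w x ih =>
    rw [rskTab_append_singleton]
    exact isTableau_insertTab x ih

theorem knuthEquiv_readingWord_rskTab (parity : α → Bool) (w : List α) :
    KnuthEquiv (IncRel parity) (DecRel parity) w (readingWord (rskTab parity w)) := by
  induction w using List.reverseRecOn with
  | nil => exact .refl _
  | append_singleton w x ih =>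
    rw [rskTab_append_singleton]
    exact (ih.append_right [x]).trans
      (knuthEquiv_insertTab x (isTableau_rskTab parity w).pairwise_of_mem)

end Insertion

section Positions

variable {β ι κ : Type*} {I : β → β → Prop} {k m : ℕ}

theorem countP_ofFn {n : ℕ} (f : Fin n → β) (p : β → Bool) :
    (List.ofFn f).countP p = (Finset.univ.filter fun i => p (f i)).card := by
  induction n with
  | zero => simp
  | succ n ih =>
    rw [List.ofFn_succ, List.countP_cons, ih, Finset.card_filter, Finset.card_filter,
      Fin.sum_univ_succ, add_comm]

theorem hasChains_ofFn {n : ℕ} {a : Fin n → β} :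
    HasChains I (List.ofFn a) k m ↔ ∃ f : Fin n → Option (Fin k),
      (∀ i j, i < j → ColorRel I (a i, f i) (a j, f j)) ∧
        (Finset.univ.filter fun i => (f i).isSome).card = m := by
  constructor
  · intro hm
    obtain ⟨n', c, hca, hc, rfl⟩ := List.exists_iff_exists_tuple.1 hm
    obtain rfl : n' = n := by simpa using congrArg List.length hca
    rw [List.map_ofFn] at hca
    obtain rfl := List.ofFn_injective hca
    exact ⟨Prod.snd ∘ c, fun _ _ hij => List.pairwise_ofFn.1 hc hij,
      (countP_ofFn c fun p => p.2.isSome).symm⟩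
  · rintro ⟨f, hf, rfl⟩
    exact ⟨List.ofFn fun i => (a i, f i), by simp [List.map_ofFn, Function.comp_def],
      List.pairwise_ofFn.2 hf, countP_ofFn _ _⟩

theorem exists_eq_some_iff_mem {A : κ → Finset ι} (hA : ∀ s t, s ≠ t → Disjoint (A s) (A t)) :
    ∃ f : ι → Option κ, ∀ i t, f i = some t ↔ i ∈ A t := by
  suffices hcolor : ∀ i, ∃ o : Option κ, ∀ t, o = some t ↔ i ∈ A t from Classical.skolem.1 hcolor
  intro i
  by_cases hi : ∃ t, i ∈ A t
  · obtain ⟨t, ht⟩ := hi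
    refine ⟨some t, fun s => ⟨fun hts => Option.some.inj hts ▸ ht, fun hs => ?_⟩⟩
    by_contra hts
    exact Finset.disjoint_left.1 (hA t s fun h => hts (congrArg some h)) ht hs
  · exact ⟨none, fun t => by simpa using fun ht => hi ⟨t, ht⟩⟩

theorem sum_card_eq_card_isSome [Fintype ι] [Fintype κ] {f : ι → Option κ} {A : κ → Finset ι}
    (hf : ∀ i t, f i = some t ↔ i ∈ A t) :
    ∑ t, (A t).card = (Finset.univ.filter fun i => (f i).isSome).card := by
  classical
  have hA : ∀ t, A t = Finset.univ.filter fun i => f i = some t := fun t => by ext; simp [hf]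
  simp only [hA, Finset.card_filter]
  rw [Finset.sum_comm]
  refine Finset.sum_congr rfl fun i _ => ?_
  cases f i <;> simp

theorem hasChains_iff_exists_disjoint {w : List β} :
    HasChains I w k m ↔ ∃ A : Fin k → Finset (Fin w.length),
      (∀ s t, s ≠ t → Disjoint (A s) (A t)) ∧
      (∀ t, ∀ i ∈ A t, ∀ j ∈ A t, i < j → I (w.get i) (w.get j)) ∧
      ∑ t, (A t).card = m := by
  have hofFn := hasChains_ofFn (I := I) (a := w.get) (k := k) (m := m)
  rw [List.ofFn_get] at hofFn
  rw [hofFn]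
  constructor
  · rintro ⟨f, hf, rfl⟩
    have hmem : ∀ i t, f i = some t ↔ i ∈ Finset.univ.filter fun i => f i = some t := by simp
    refine ⟨fun t => Finset.univ.filter fun i => f i = some t, fun s t hst => ?_, ?_,
      sum_card_eq_card_isSome hmem⟩
    · refine Finset.disjoint_left.2 fun i hs ht => hst ?_
      exact Option.some.inj (((hmem i s).2 hs).symm.trans ((hmem i t).2 ht))
    · exact fun t i hi j hj hij => hf i j hij t ((hmem i t).2 hi) ((hmem j t).2 hj)
  · rintro ⟨A, hA, hI, rfl⟩
    obtain ⟨f, hf⟩ := exists_eq_some_iff_mem hA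
    exact ⟨f, fun i j hij t hi hj => hI t i ((hf i t).1 hi) j ((hf j t).1 hj) hij,
      (sum_card_eq_card_isSome hf).symm⟩

end Positions

theorem isGreatest_rows_rskTab (parity : α → Bool) (w : List α) (k : ℕ) :
    IsGreatest {m | HasChains (IncRel parity) w k m}
      (((rskTab parity w).map List.length).take k).sum := by
  have h := complTrans_incRel_decRel parity
  simpa only [(knuthEquiv_readingWord_rskTab parity w).hasChains_iff h] using
    (isTableau_rskTab parity w).isGreatest_rows h k

theorem isGreatest_columns_rskTab (parity : α → Bool) (w : List α) (k : ℕ) :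
    IsGreatest {m | HasChains (DecRel parity) w k m}
      (∑ j ∈ Finset.range k, (rskTab parity w).countP fun r => j < r.length) := by
  have h := complTrans_incRel_decRel parity
  simpa only [(knuthEquiv_readingWord_rskTab parity w).dual.hasChains_iff h.symm] using
    (isTableau_rskTab parity w).isGreatest_columns h k

/-- Greene's theorem for the generalized RSK algorithm: for every `k ≥ 1`, the sum of the
first `k` row lengths of the shape `φ(w)` equals `r_k(w)`, the maximal total size of a
union of `k` position-disjoint increasing subsequences of `w`, and the sum of the first
`k` column lengths equals `c_k(w)`, the analogous quantity for decreasing subsequences.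
Here consecutive letters `x, y` of an increasing subsequence satisfy `x < y`, or `x = y`
with `x` even, and of a decreasing one `x > y`, or `x = y` with `x` odd; subsequences are
encoded by their sets of positions. -/
theorem stmt17 (parity : α → Bool) (w : List α) (k : ℕ) (hk : 1 ≤ k) :
    ((((rskTab parity w).map List.length).take k).sum =
      sSup {m : ℕ | ∃ A : Fin k → Finset (Fin w.length),
        (∀ s t, s ≠ t → Disjoint (A s) (A t)) ∧
        (∀ t, ∀ i ∈ A t, ∀ j ∈ A t, i < j →
          (w.get i < w.get j ∨ (w.get i = w.get j ∧ parity (w.get i) = true))) ∧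
        ∑ t, (A t).card = m}) ∧
    ((∑ j ∈ Finset.range k, (rskTab parity w).countP (fun r => decide (j < r.length))) =
      sSup {m : ℕ | ∃ A : Fin k → Finset (Fin w.length),
        (∀ s t, s ≠ t → Disjoint (A s) (A t)) ∧
        (∀ t, ∀ i ∈ A t, ∀ j ∈ A t, i < j →
          (w.get j < w.get i ∨ (w.get i = w.get j ∧ parity (w.get i) = false))) ∧
        ∑ t, (A t).card = m}) := by
  have hrows := (isGreatest_rows_rskTab parity w k).csSup_eq
  have hcolumns := (isGreatest_columns_rskTab parity w k).csSup_eq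
  simp only [hasChains_iff_exists_disjoint] at hrows hcolumns
  exact ⟨hrows.symm, hcolumns.symm⟩
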